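/- Let 0<s<1 and 2s<r<1+2s, and let v:ℝ→ℝ be a bounded measurable odd function with v(x) = x^r for 0≤x≤1 (hence v(x) = -|x|^r for -1≤x<0). Define H(x) := ∫_{ℝ∖(-1/2,1/2)} (v(x+y) - v(x)) |y|^{-1-2s} dy, and suppose that the map t ↦ H(t^{1/r}) is Lipschitz continuous on [0, 2^{-r}]. Then, with β := (r-2s)/r, there exists f ∈ C^β([-2^{-r}, 2^{-r}]) such that (-Δ)^s v(x) = f(v(x)) for all x ∈ [-1/2, 1/2]. -/

import Mathlib

open MeasureTheory Filter Set

/-- The normalizing constant `c_s` of the fractional Laplacian. -/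
noncomputable def fracLapCoef (s : ℝ) : ℝ :=
  s * (4 : ℝ) ^ s * Real.Gamma (1 / 2 + s) / (Real.sqrt Real.pi * Real.Gamma (1 - s))

/-- `HasFracLapAt s u x L` means the principal value defining `(-Δ)^s u (x)`
exists and equals `L`. -/
def HasFracLapAt (s : ℝ) (u : ℝ → ℝ) (x L : ℝ) : Prop :=
  (∀ ε : ℝ, 0 < ε →
    MeasureTheory.IntegrableOn (fun y : ℝ => (u x - u y) / |x - y| ^ (1 + 2 * s))
      {y : ℝ | ε < |y - x|}) ∧
  Filter.Tendsto (fun ε : ℝ =>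
      fracLapCoef s * ∫ y in {y : ℝ | ε < |y - x|}, (u x - u y) / |x - y| ^ (1 + 2 * s))
    (nhdsWithin 0 (Set.Ioi 0)) (nhds L)

/-- `MemCalpha α Ω f` : `f ∈ C^α(Ω)`, i.e. `f` is continuously differentiable with bounded
derivatives up to order `⌊α⌋` on `Ω`, and its `⌊α⌋`-th derivative is Hölder continuous of
exponent `α - ⌊α⌋` on `Ω`. -/
def MemCalpha (α : ℝ) (Ω : Set ℝ) (f : ℝ → ℝ) : Prop :=
  ContDiffOn ℝ (⌊α⌋₊ : ℕ) f Ω ∧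
  (∀ k : ℕ, k ≤ ⌊α⌋₊ → ∃ C : ℝ, ∀ x ∈ Ω, |iteratedDerivWithin k f Ω x| ≤ C) ∧
  ∃ C : NNReal, HolderOnWith C (α - (⌊α⌋₊ : ℝ)).toNNReal (iteratedDerivWithin ⌊α⌋₊ f Ω) Ω

open Real in
lemma pow_diff (p m M a b : ℝ) (hm : 0 < m) (ha : a ∈ Icc m M) (hb : b ∈ Icc m M) :
    |a ^ p - b ^ p| ≤ |p| * (m ^ (p - 1) + M ^ (p - 1)) * |a - b| := by
  have hM : 0 < M := lt_of_lt_of_le hm (ha.1.trans ha.2)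
  have := Convex.norm_image_sub_le_of_norm_hasDerivWithin_le (f := fun x : ℝ => x ^ p)
    (f' := fun x => p * x ^ (p - 1)) (s := Icc m M) (x := b) (y := a)
    (C := |p| * (m ^ (p - 1) + M ^ (p - 1)))
    (fun x hx => (Real.hasDerivAt_rpow_const
      (Or.inl (lt_of_lt_of_le hm hx.1).ne')).hasDerivWithinAt) ?_ (convex_Icc _ _) hb ha
  · simpa using this
  · intro x hx
    have hx0 : 0 < x := lt_of_lt_of_le hm hx.1
    rw [Real.norm_eq_abs, abs_mul, abs_of_pos (Real.rpow_pos_of_pos hx0 _)]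
    gcongr
    have h1 := Real.rpow_pos_of_pos hm (p - 1)
    have h2 := Real.rpow_pos_of_pos hM (p - 1)
    rcases le_total 1 p with h | h
    · have := Real.rpow_le_rpow hx0.le hx.2 (sub_nonneg.2 h)
      linarith
    · have := Real.rpow_le_rpow_of_nonpos hm hx.1 (sub_nonpos.2 h)
      linarith

lemma pow_holder (p β : ℝ) (hβ0 : 0 < β) (hβ1 : β ≤ 1) (hp : β ≤ p) :
    ∃ C : ℝ, 0 ≤ C ∧ ∀ t ∈ Icc (0:ℝ) 1, ∀ u ∈ Icc (0:ℝ) 1,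
      |t ^ p - u ^ p| ≤ C * |t - u| ^ β := by
  have hp0 : 0 < p := by linarith
  refine ⟨p + 1, by linarith, ?_⟩
  have key : ∀ t ∈ Icc (0:ℝ) 1, ∀ u ∈ Icc (0:ℝ) 1, u ≤ t →
      |t ^ p - u ^ p| ≤ (p + 1) * |t - u| ^ β := by
    intro t ht u hu hut
    have hd0 : 0 ≤ t - u := by linarith
    have hd1 : t - u ≤ 1 := by linarith [ht.2, hu.1]
    have hmono := Real.rpow_le_rpow hu.1 hut hp0.le
    rw [abs_of_nonneg (by linarith), abs_of_nonneg hd0]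
    have hpos : 0 ≤ (t - u) ^ β := Real.rpow_nonneg hd0 _
    rcases le_total p 1 with h | h
    · have h1 := Real.rpow_add_le_add_rpow hu.1 hd0 hp0.le h
      have h2 : (t - u) ^ p ≤ (t - u) ^ β := 
        Real.rpow_le_rpow_of_exponent_ge' hd0 hd1 hβ0.le hp
      rw [add_sub_cancel] at h1
      nlinarith
    · have h2 : (t - u) ≤ (t - u) ^ β := by
        have := Real.rpow_le_rpow_of_exponent_ge' hd0 hd1 hβ0.le hβ1
        rwa [Real.rpow_one] at this
      have h3 : ‖t ^ p - u ^ p‖ ≤ p * ‖t - u‖ := by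
        refine Convex.norm_image_sub_le_of_norm_hasDerivWithin_le (f := fun x : ℝ => x ^ p)
          (f' := fun x => p * x ^ (p - 1)) (s := Icc 0 1) (x := u) (y := t)
          (fun x hx => (Real.hasDerivAt_rpow_const (Or.inr h)).hasDerivWithinAt) ?_
          (convex_Icc _ _) hu ht
        intro x hx
        have := Real.rpow_le_one hx.1 hx.2 (sub_nonneg.2 h)
        have h0 := Real.rpow_nonneg hx.1 (p - 1)
        rw [Real.norm_eq_abs, abs_of_nonneg (by positivity)]
        nlinarith
      rw [Real.norm_eq_abs, Real.norm_eq_abs, abs_of_nonneg (by linarith), abs_of_nonneg hd0] at h3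
      nlinarith
  intro t ht u hu
  rcases le_total u t with h | h
  · exact key t ht u hu h
  · rw [abs_sub_comm, abs_sub_comm t u]
    exact key u hu t ht h

/-- The odd power. -/
noncomputable def oddPow (r x : ℝ) : ℝ := (max x 0) ^ r - (max (-x) 0) ^ r

lemma oddPow_neg (r x : ℝ) : oddPow r (-x) = - oddPow r x := by
  simp [oddPow]

lemma oddPow_nonneg {r x : ℝ} (hr : 0 < r) (hx : 0 ≤ x) : oddPow r x = x ^ r := by
  simp [oddPow, hx, Real.zero_rpow hr.ne']

lemma oddPow_continuous {r : ℝ} (hr : 0 < r) : Continuous (oddPow r) := by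
  unfold oddPow
  exact ((continuous_id.max continuous_const).rpow_const (fun _ => Or.inr hr.le)).sub
    ((continuous_neg.max continuous_const).rpow_const (fun _ => Or.inr hr.le))

lemma oddPow_mul {r l x : ℝ} (hl : 0 < l) : oddPow r (l * x) = l ^ r * oddPow r x := by
  have h1 : max (l * x) 0 = l * max x 0 := by
    rw [mul_max_of_nonneg _ _ hl.le, mul_zero]
  have h2 : max (-(l * x)) 0 = l * max (-x) 0 := by
    rw [mul_max_of_nonneg _ _ hl.le, mul_zero, mul_neg]
  rw [oddPow, h1, h2, Real.mul_rpow hl.le (le_max_right _ _),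
    Real.mul_rpow hl.le (le_max_right _ _), oddPow]
  ring

/-- second difference quotient -/
noncomputable def sdq (r s x y : ℝ) : ℝ :=
  (2 * oddPow r x - oddPow r (x + y) - oddPow r (x - y)) / y ^ (1 + 2 * s)

lemma sdq_neg (r s x y : ℝ) : sdq r s (-x) y = - sdq r s x y := by
  unfold sdq
  rw [show -x + y = -(x - y) by ring, show -x - y = -(x + y) by ring, oddPow_neg, oddPow_neg,
    oddPow_neg]
  ring

lemma sdq_mul {r s l x y : ℝ} (hl : 0 < l) (hy : 0 < y) :
    sdq r s (l * x) (l * y) = l ^ (r - 1 - 2 * s) * sdq r s x y := by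
  unfold sdq
  rw [← mul_add, ← mul_sub, oddPow_mul hl, oddPow_mul hl, oddPow_mul hl,
    Real.mul_rpow hl.le hy.le, show r - 1 - 2 * s = r - (1 + 2 * s) by ring, Real.rpow_sub hl]
  have := (Real.rpow_pos_of_pos hl (1 + 2 * s)).ne'
  have := (Real.rpow_pos_of_pos hy (1 + 2 * s)).ne'
  field_simp

lemma sdq_meas {r : ℝ} (hr : 0 < r) (s x : ℝ) : Measurable (sdq r s x) := by
  unfold sdq
  have := (oddPow_continuous hr).measurable
  fun_prop

/-- tail weight -/
noncomputable def wt (r s y : ℝ) : ℝ :=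
  ((y - 1/2) ^ (r - 1) + (y + 1/2) ^ (r - 1)) / y ^ (1 + 2 * s)

lemma int_pow_inv {s a : ℝ} (hs : 0 < s) (ha : 0 < a) :
    IntegrableOn (fun y : ℝ => 1 / y ^ (1 + 2 * s)) (Ioi a) := by
  refine (integrableOn_Ioi_rpow_of_lt (a := -(1 + 2 * s)) (by linarith) ha).congr_fun ?_
    measurableSet_Ioi
  intro y hy
  simp only
  rw [Real.rpow_neg (ha.trans hy).le, one_div]

lemma rpow_between {q y z : ℝ} (hy : 0 < y) (h1 : y / 2 ≤ z) (h2 : z ≤ 2 * y) :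
    z ^ q ≤ ((2:ℝ) ^ q + (1/2) ^ q) * y ^ q := by
  rw [add_mul, ← Real.mul_rpow (by norm_num) hy.le, ← Real.mul_rpow (by norm_num) hy.le]
  have hz : 0 < z := by linarith
  have p1 : 0 ≤ (2 * y) ^ q := by positivity
  have p2 : 0 ≤ (1 / 2 * y) ^ q := by positivity
  rcases le_total 0 q with h | h
  · have := Real.rpow_le_rpow hz.le h2 h
    linarith
  · have := Real.rpow_le_rpow_of_nonpos (z := q) (x := 1 / 2 * y) (y := z) (by positivity) (by linarith) h
    linarith

lemma int_wt {r s : ℝ} (hr : 0 < r) (hs : 0 < s) (hr2 : r < 1 + 2 * s) :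
    IntegrableOn (wt r s) (Ioi (1/2)) := by
  have hmeas : Measurable (wt r s) := by unfold wt; fun_prop
  rw [← Ioc_union_Ioi_eq_Ioi (show (1/2 : ℝ) ≤ 1 by norm_num)]
  refine IntegrableOn.union ?_ ?_
  · have h0 : IntegrableOn (fun y : ℝ => (y - 1/2) ^ (r - 1)) (Ioc (1/2) 1) := by
      have h := (intervalIntegral.intervalIntegrable_rpow' (a := 0) (b := 1/2)
        (r := r - 1) (by linarith)).comp_sub_right (1/2)
      norm_num at h
      rw [intervalIntegrable_iff_integrableOn_Ioc_of_le (by norm_num)] at h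
      exact h
    have h1 : IntegrableOn (fun y : ℝ => (y + 1/2) ^ (r - 1)) (Ioc (1/2) 1) := by
      refine (ContinuousOn.integrableOn_Icc ?_).mono_set Ioc_subset_Icc_self
      refine ContinuousOn.rpow_const (by fun_prop) ?_
      intro y hy; left; linarith [hy.1]
    have h2 := (h0.add h1).const_mul ((2:ℝ) ^ (1 + 2 * s))
    refine Integrable.mono' h2 hmeas.aestronglyMeasurable ?_
    refine (ae_restrict_iff' measurableSet_Ioc).2 (Eventually.of_forall ?_)
    intro y hy
    have hy0 : 0 < y := by linarith [hy.1]
    have e1 : 0 ≤ (y - 1/2) ^ (r - 1) := Real.rpow_nonneg (by linarith [hy.1]) _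
    have e2 : 0 ≤ (y + 1/2) ^ (r - 1) := Real.rpow_nonneg (by linarith [hy.1]) _
    have e3 : 0 < y ^ (1 + 2 * s) := Real.rpow_pos_of_pos hy0 _
    have e4 : 1 ≤ (2:ℝ) ^ (1 + 2 * s) * y ^ (1 + 2 * s) := by
      rw [← Real.mul_rpow (by norm_num) hy0.le]
      exact Real.one_le_rpow (by linarith [hy.1]) (by linarith)
    rw [wt, Real.norm_eq_abs, abs_of_nonneg (by positivity), div_le_iff₀ e3]
    simp only [Pi.add_apply]
    nlinarith
  · have h := (integrableOn_Ioi_rpow_of_lt (a := r - 1 - (1 + 2 * s)) (c := 1) (by linarith)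
      one_pos).const_mul (2 * ((2:ℝ) ^ (r-1) + (1/2) ^ (r-1)))
    refine Integrable.mono' h hmeas.aestronglyMeasurable ?_
    refine (ae_restrict_iff' measurableSet_Ioi).2 (Eventually.of_forall ?_)
    intro y (hy : 1 < y)
    have hy0 : 0 < y := by linarith
    have e1 : 0 ≤ (y - 1/2) ^ (r - 1) := Real.rpow_nonneg (by linarith) _
    have e2 : 0 ≤ (y + 1/2) ^ (r - 1) := Real.rpow_nonneg (by linarith) _
    have e3 : 0 < y ^ (1 + 2 * s) := Real.rpow_pos_of_pos hy0 _
    rw [wt, Real.norm_eq_abs, abs_of_nonneg (by positivity), Real.rpow_sub hy0 (r - 1), ← mul_div_assoc]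
    gcongr
    have := rpow_between (q := r - 1) hy0 (z := y - 1/2) (by linarith) (by linarith)
    have := rpow_between (q := r - 1) hy0 (z := y + 1/2) (by linarith) (by linarith)
    linarith

lemma sdq_tail_eq {r s x y : ℝ} (hr : 0 < r) (hx0 : 0 ≤ x) (hx : x ≤ 1/2) (hy : 1/2 < y) :
    sdq r s x y = (2 * x ^ r - (y + x) ^ r + (y - x) ^ r) / y ^ (1 + 2 * s) := by
  unfold sdq
  rw [oddPow_nonneg hr hx0, oddPow_nonneg hr (by linarith), ← neg_sub y x, oddPow_neg,
    oddPow_nonneg hr (by linarith), add_comm x y, sub_neg_eq_add]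

lemma sdq_tail_diff {r s x x' y : ℝ} (hr : 0 < r) (hx0 : 0 ≤ x) (hx : x ≤ 1/2)
    (hx0' : 0 ≤ x') (hx' : x' ≤ 1/2) (hy : 1/2 < y) :
    |sdq r s x y - sdq r s x' y| ≤
      2 * |x ^ r - x' ^ r| * (1 / y ^ (1 + 2 * s)) + 2 * r * |x - x'| * wt r s y := by
  rw [sdq_tail_eq hr hx0 hx hy, sdq_tail_eq hr hx0' hx' hy, wt, ← sub_div, abs_div]
  have e3 : 0 < y ^ (1 + 2 * s) := Real.rpow_pos_of_pos (by linarith) _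
  rw [abs_of_pos e3, mul_one_div, ← mul_div_assoc, ← add_div]
  gcongr
  have h1 := pow_diff r (y - 1/2) (y + 1/2) (y + x) (y + x') (by linarith)
    ⟨by linarith, by linarith⟩ ⟨by linarith, by linarith⟩
  have h2 := pow_diff r (y - 1/2) (y + 1/2) (y - x) (y - x') (by linarith)
    ⟨by linarith, by linarith⟩ ⟨by linarith, by linarith⟩
  rw [add_sub_add_left_eq_sub, abs_of_pos hr] at h1
  rw [sub_sub_sub_cancel_left, abs_of_pos hr, abs_sub_comm x'] at h2
  rw [show 2 * x ^ r - (y + x) ^ r + (y - x) ^ r - (2 * x' ^ r - (y + x') ^ r + (y - x') ^ r)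
    = 2 * (x ^ r - x' ^ r) - ((y + x) ^ r - (y + x') ^ r) + ((y - x) ^ r - (y - x') ^ r) by ring]
  refine (abs_add_le _ _).trans ?_
  refine (add_le_add_left (abs_sub _ _) _).trans ?_
  rw [abs_mul, abs_two]
  linarith

lemma sdq_zero (r s y : ℝ) (hr : 0 < r) : sdq r s 0 y = 0 := by
  unfold sdq
  rw [oddPow_nonneg hr le_rfl, Real.zero_rpow hr.ne', zero_add, zero_sub, oddPow_neg]
  simp

lemma int_sdq_tail {r s x : ℝ} (hr : 0 < r) (hs : 0 < s) (hr2 : r < 1 + 2 * s)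
    (hx0 : 0 ≤ x) (hx : x ≤ 1/2) : IntegrableOn (sdq r s x) (Ioi (1/2)) := by
  have h := ((int_pow_inv hs (a := 1/2) (by norm_num)).const_mul (2 * |x ^ r - 0 ^ r|)).add
    ((int_wt hr hs hr2).const_mul (2 * r * |x - 0|))
  refine Integrable.mono' h (sdq_meas hr s x).aestronglyMeasurable ?_
  refine (ae_restrict_iff' measurableSet_Ioi).2 (Eventually.of_forall ?_)
  intro y hy
  have := sdq_tail_diff (s := s) hr hx0 hx le_rfl (by norm_num) hy
  rw [sdq_zero _ _ _ hr, sub_zero (sdq r s x y)] at this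
  exact this

lemma sd_near {r z : ℝ} (hr : 0 < r) (hz0 : 0 ≤ z) (hz : z ≤ 1/4) :
    |2 * (1/2 : ℝ) ^ r - (1/2 + z) ^ r - (1/2 - z) ^ r| ≤
      r * (|r - 1| * ((1/4) ^ (r - 1 - 1) + (3/4) ^ (r - 1 - 1)) * (2 * z)) * z := by
  set K := |r - 1| * ((1/4 : ℝ) ^ (r - 1 - 1) + (3/4) ^ (r - 1 - 1)) with hK
  have hK0 : 0 ≤ K := by positivity
  have := Convex.norm_image_sub_le_of_norm_hasDerivWithin_le
    (f := fun w : ℝ => (1/2 + w) ^ r + (1/2 - w) ^ r)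
    (f' := fun w => r * ((1/2 + w) ^ (r - 1) - (1/2 - w) ^ (r - 1)))
    (s := Icc 0 z) (x := 0) (y := z)
    (C := r * (K * (2 * z))) ?_ ?_ (convex_Icc _ _) ⟨le_rfl, hz0⟩ ⟨hz0, le_rfl⟩
  · simp only [Real.norm_eq_abs, sub_zero, add_zero, abs_of_nonneg hz0] at this
    rw [← abs_neg]
    convert this using 2
    ring
  · intro w hw
    have h1 := ((hasDerivAt_id w).const_add (1/2)).rpow_const (p := r)
      (Or.inl (by simp only [id]; linarith [hw.1]))
    have h2 := ((hasDerivAt_id w).const_sub (1/2)).rpow_const (p := r)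
      (Or.inl (by simp only [id]; linarith [hw.2]))
    refine HasDerivAt.hasDerivWithinAt ?_
    refine (h1.add h2).congr_deriv ?_
    simp only [id]
    ring
  · intro w hw
    rw [Real.norm_eq_abs, abs_mul, abs_of_pos hr]
    gcongr
    have := pow_diff (r - 1) (1/4) (3/4) (1/2 + w) (1/2 - w) (by norm_num)
      ⟨by linarith [hw.1], by linarith [hw.2]⟩ ⟨by linarith [hw.2], by linarith [hw.1]⟩
    refine this.trans ?_
    rw [show 1/2 + w - (1/2 - w) = 2 * w by ring,
      abs_of_nonneg (show 0 ≤ 2 * w by linarith [hw.1]), ← hK]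
    gcongr
    exact hw.2

lemma int_sdq_half {r s : ℝ} (hr : 0 < r) (hs : 0 < s) (hs1 : s < 1) (hr2 : r < 1 + 2 * s) :
    IntegrableOn (sdq r s (1/2)) (Ioi 0) := by
  rw [← Ioc_union_Ioi_eq_Ioi (show (0 : ℝ) ≤ 1/2 by norm_num),
    ← Ioc_union_Icc_eq_Ioc (show (0 : ℝ) < 1/4 by norm_num) (show (1/4 : ℝ) ≤ 1/2 by norm_num)]
  refine (IntegrableOn.union ?_ ?_).union (int_sdq_tail hr hs hr2 (by norm_num) le_rfl)
  · have h := (intervalIntegral.intervalIntegrable_rpow' (a := 0) (b := 1/4)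
        (r := 1 - 2 * s) (by linarith)).const_mul 
        (r * (|r - 1| * ((1/4) ^ (r - 1 - 1) + (3/4) ^ (r - 1 - 1)) * 2))
    rw [intervalIntegrable_iff_integrableOn_Ioc_of_le (by norm_num)] at h
    refine Integrable.mono' h (sdq_meas hr s _).aestronglyMeasurable ?_
    refine (ae_restrict_iff' measurableSet_Ioc).2 (Eventually.of_forall ?_)
    intro y hy
    have hy0 : 0 < y := hy.1
    have e3 : 0 < y ^ (1 + 2 * s) := Real.rpow_pos_of_pos hy0 _
    have := sd_near hr hy0.le hy.2
    rw [sdq, oddPow_nonneg hr (by norm_num), oddPow_nonneg hr (by linarith),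
      oddPow_nonneg hr (by linarith [hy.2]), Real.norm_eq_abs, abs_div, abs_of_pos e3,
      div_le_iff₀ e3]
    refine this.trans (le_of_eq ?_)
    rw [mul_assoc _ (y ^ (1 - 2 * s)), ← Real.rpow_add hy0,
      show 1 - 2 * s + (1 + 2 * s) = 2 by ring, Real.rpow_two]
    ring
  · refine ContinuousOn.integrableOn_Icc ?_
    unfold sdq
    have := oddPow_continuous hr
    refine ContinuousOn.div (by fun_prop) ?_ ?_
    · refine ContinuousOn.rpow_const (by fun_prop) ?_
      intro y hy; left; linarith [hy.1]
    · intro y hy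
      exact (Real.rpow_pos_of_pos (by linarith [hy.1]) _).ne'

lemma int_sdq_pos {r s x : ℝ} (hr : 0 < r) (hs : 0 < s) (hs1 : s < 1) (hr2 : r < 1 + 2 * s)
    (hx : 0 < x) : IntegrableOn (sdq r s x) (Ioi 0) ∧
      ∫ y in Ioi 0, sdq r s x y = (2 * x) ^ (r - 2 * s) * ∫ y in Ioi 0, sdq r s (1/2) y := by
  have hl : 0 < 2 * x := by linarith
  have e : ∀ y ∈ Ioi (0:ℝ), (2 * x) ^ (r - 1 - 2 * s) * sdq r s (1/2) y
      = sdq r s x ((2 * x) * y) := by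
    intro y hy
    rw [← sdq_mul hl hy]
    congr 1; ring
  constructor
  · have h := IntegrableOn.congr_fun
      ((int_sdq_half hr hs hs1 hr2).const_mul ((2 * x) ^ (r - 1 - 2 * s))) e measurableSet_Ioi
    rw [integrableOn_Ioi_comp_mul_left_iff _ _ hl, mul_zero] at h
    exact h
  · have h := integral_comp_mul_left_Ioi (sdq r s x) 0 hl
    rw [← setIntegral_congr_fun measurableSet_Ioi e, integral_const_mul, mul_zero, smul_eq_mul] at h
    rw [show r - 2 * s = r - 1 - 2 * s + 1 by ring, Real.rpow_add_one hl.ne']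
    rw [mul_comm _ (2 * x), mul_assoc, h, ← mul_assoc, mul_inv_cancel₀ hl.ne', one_mul]

lemma int_sdq_nonneg {r s x : ℝ} (hr : 2 * s < r) (hs : 0 < s) (hs1 : s < 1) (hr2 : r < 1 + 2 * s)
    (hx : 0 ≤ x) : IntegrableOn (sdq r s x) (Ioi 0) ∧
      ∫ y in Ioi 0, sdq r s x y = (2 * x) ^ (r - 2 * s) * ∫ y in Ioi 0, sdq r s (1/2) y := by
  rcases hx.eq_or_lt with rfl | h
  · have e : sdq r s 0 = fun _ => 0 := by
      ext y; exact sdq_zero r s y (by linarith)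
    rw [e]
    simp [Real.zero_rpow (show r - 2 * s ≠ 0 by linarith)]
  · exact int_sdq_pos (by linarith) hs hs1 hr2 h

lemma int_sdq {r s x : ℝ} (hr : 2 * s < r) (hs : 0 < s) (hs1 : s < 1) (hr2 : r < 1 + 2 * s) :
    IntegrableOn (sdq r s x) (Ioi 0) := by
  rcases le_total 0 x with h | h
  · exact (int_sdq_nonneg hr hs hs1 hr2 h).1
  · have := (int_sdq_nonneg (x := -x) hr hs hs1 hr2 (by linarith)).1.neg
    refine this.congr_fun ?_ measurableSet_Ioi
    intro y _
    simp [sdq_neg]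

/-- near part -/
noncomputable def nearG (r s x : ℝ) : ℝ := ∫ y in Ioc 0 (1/2), sdq r s x y

lemma nearG_neg (r s x : ℝ) : nearG r s (-x) = - nearG r s x := by
  unfold nearG
  simp_rw [sdq_neg]
  rw [integral_neg]

lemma nearG_eq {r s x : ℝ} (hr : 2 * s < r) (hs : 0 < s) (hs1 : s < 1) (hr2 : r < 1 + 2 * s)
    (hx : 0 ≤ x) : nearG r s x = (2 * x) ^ (r - 2 * s) * (∫ y in Ioi 0, sdq r s (1/2) y)
      - ∫ y in Ioi (1/2), sdq r s x y := by
  obtain ⟨h1, h2⟩ := int_sdq_nonneg hr hs hs1 hr2 hx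
  have h3 : Ioc (0:ℝ) (1/2) ∪ Ioi (1/2) = Ioi 0 := Ioc_union_Ioi_eq_Ioi (by norm_num)
  rw [← h2, ← h3, setIntegral_union (by simp) measurableSet_Ioi
    (h1.mono_set Ioc_subset_Ioi_self) (h1.mono_set (Ioi_subset_Ioi (by norm_num)))]
  unfold nearG
  ring

lemma nearG_holder {r s : ℝ} (hr : 2 * s < r) (hs : 0 < s) (hs1 : s < 1) (hr2 : r < 1 + 2 * s) :
    ∃ C : ℝ, 0 ≤ C ∧ ∀ t ∈ Icc (0:ℝ) (2 ^ (-r)), ∀ u ∈ Icc (0:ℝ) (2 ^ (-r)),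
      |nearG r s (t ^ (1/r)) - nearG r s (u ^ (1/r))| ≤ C * |t - u| ^ ((r - 2 * s) / r) := by
  have hr0 : 0 < r := by linarith
  set β := (r - 2 * s) / r with hβ
  have hβ0 : 0 < β := div_pos (by linarith) hr0
  have hβ1 : β ≤ 1 := by rw [hβ, div_le_one hr0]; linarith
  obtain ⟨C1, hC1, h1⟩ := pow_holder β β hβ0 hβ1 le_rfl
  obtain ⟨C2, hC2, h2⟩ := pow_holder (1/r) β hβ0 hβ1 (by rw [hβ]; gcongr; linarith)
  obtain ⟨C3, hC3, h3⟩ := pow_holder 1 β hβ0 hβ1 hβ1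
  set A := ∫ y in Ioi 0, sdq r s (1/2) y with hA
  set B := ∫ y : ℝ in Ioi (1/2), 1 / y ^ (1 + 2 * s) with hB
  set W := ∫ y in Ioi (1/2), wt r s y with hW
  have hB0 : 0 ≤ B := setIntegral_nonneg measurableSet_Ioi fun y hy => by
    have : (0:ℝ) < y := by linarith [mem_Ioi.1 hy]
    positivity
  have hW0 : 0 ≤ W := setIntegral_nonneg measurableSet_Ioi fun y hy => by
    have hy' := mem_Ioi.1 hy
    have e1 : 0 ≤ (y - 1/2) ^ (r - 1) := Real.rpow_nonneg (by linarith) _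
    have e2 : 0 ≤ (y + 1/2) ^ (r - 1) := Real.rpow_nonneg (by linarith) _
    have e3 : 0 < y ^ (1 + 2 * s) := Real.rpow_pos_of_pos (by linarith) _
    unfold wt; positivity
  have ha1 : (2:ℝ) ^ (-r) ≤ 1 := Real.rpow_le_one_of_one_le_of_nonpos (by norm_num) (by linarith)
  have hx : ∀ t ∈ Icc (0:ℝ) (2 ^ (-r)), t ^ (1/r) ≤ 1/2 := by
    intro t ht
    have := Real.rpow_le_rpow ht.1 ht.2 (show 0 ≤ 1/r by positivity)
    rwa [← Real.rpow_mul (by norm_num), show -r * (1/r) = -1 by field_simp, Real.rpow_neg_one,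
      ← one_div] at this
  have hpr : ∀ t ∈ Icc (0:ℝ) (2 ^ (-r)), (t ^ (1/r)) ^ r = t := by
    intro t ht
    rw [← Real.rpow_mul ht.1, one_div_mul_cancel hr0.ne', Real.rpow_one]
  have hpb : ∀ t ∈ Icc (0:ℝ) (2 ^ (-r)),
      (2 * t ^ (1/r)) ^ (r - 2 * s) = 2 ^ (r - 2 * s) * t ^ β := by
    intro t ht
    rw [Real.mul_rpow (by norm_num) (Real.rpow_nonneg ht.1 _), ← Real.rpow_mul ht.1,
      one_div_mul_eq_div]
  refine ⟨2 ^ (r - 2 * s) * |A| * C1 + (2 * C3 * B + 2 * r * C2 * W), by positivity, ?_⟩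
  intro t ht u hu
  have ht1 : t ∈ Icc (0:ℝ) 1 := ⟨ht.1, ht.2.trans ha1⟩
  have hu1 : u ∈ Icc (0:ℝ) 1 := ⟨hu.1, hu.2.trans ha1⟩
  have b1 := h1 t ht1 u hu1
  have b2 := h2 t ht1 u hu1
  have b3 := h3 t ht1 u hu1
  rw [Real.rpow_one, Real.rpow_one] at b3
  have ht0 : 0 ≤ t ^ (1/r) := Real.rpow_nonneg ht.1 _
  have hu0 : 0 ≤ u ^ (1/r) := Real.rpow_nonneg hu.1 _
  rw [nearG_eq hr hs hs1 hr2 ht0, nearG_eq hr hs hs1 hr2 hu0, hpb t ht, hpb u hu]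
  have it := int_sdq_tail hr0 hs hr2 ht0 (hx t ht)
  have iu := int_sdq_tail hr0 hs hr2 hu0 (hx u hu)
  have T : |(∫ y in Ioi (1/2), sdq r s (t ^ (1/r)) y) - ∫ y in Ioi (1/2), sdq r s (u ^ (1/r)) y|
      ≤ 2 * |t - u| * B + 2 * r * |t ^ (1/r) - u ^ (1/r)| * W := by
    rw [← integral_sub it iu]
    have i1 := (int_pow_inv hs (a := 1/2) (by norm_num)).const_mul (2 * |t - u|)
    have i2 := (int_wt hr0 hs hr2).const_mul (2 * r * |t ^ (1/r) - u ^ (1/r)|)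
    have := norm_integral_le_of_norm_le (i1.add i2)
      (f := fun y => sdq r s (t ^ (1/r)) y - sdq r s (u ^ (1/r)) y) ?_
    · simp only [Pi.add_apply] at this
      rw [integral_add i1 i2, integral_const_mul, integral_const_mul] at this
      exact this
    · refine (ae_restrict_iff' measurableSet_Ioi).2 (Eventually.of_forall ?_)
      intro y hy
      have := sdq_tail_diff (s := s) hr0 ht0 (hx t ht) hu0 (hx u hu) hy
      rw [hpr t ht, hpr u hu] at this
      exact this
  have T2 : 2 * |t - u| * B + 2 * r * |t ^ (1/r) - u ^ (1/r)| * W ≤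
      2 * (C3 * |t - u| ^ β) * B + 2 * r * (C2 * |t - u| ^ β) * W := by gcongr
  have T1 : |2 ^ (r - 2 * s) * t ^ β * A - 2 ^ (r - 2 * s) * u ^ β * A| ≤
      2 ^ (r - 2 * s) * |A| * (C1 * |t - u| ^ β) := by
    rw [show 2 ^ (r - 2 * s) * t ^ β * A - 2 ^ (r - 2 * s) * u ^ β * A
      = 2 ^ (r - 2 * s) * A * (t ^ β - u ^ β) by ring, abs_mul, abs_mul,
      abs_of_pos (show (0:ℝ) < 2 ^ (r - 2 * s) by positivity)]
    gcongr
  rw [show ∀ a b c d : ℝ, a - b - (c - d) = (a - c) - (b - d) by intros; ring]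
  refine (abs_sub _ _).trans ?_
  linarith

lemma int_abs_inv {s ε : ℝ} (hs : 0 < s) (hε : 0 < ε) :
    IntegrableOn (fun z : ℝ => 1 / |z| ^ (1 + 2 * s)) {z : ℝ | ε < |z|} := by
  have hms : MeasurableSet {z : ℝ | ε < |z|} := measurableSet_lt (by fun_prop) (by fun_prop)
  have h := (integrable_one_add_norm (E := ℝ) (μ := volume) (r := 1 + 2 * s)
    (by simp; linarith)).const_mul (((1 + ε) / ε) ^ (1 + 2 * s))
  refine Integrable.mono' h.integrableOn 
    (by fun_prop : Measurable fun z : ℝ => 1 / |z| ^ (1 + 2 * s)).aestronglyMeasurable ?_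
  refine (ae_restrict_iff' hms).2 (Eventually.of_forall ?_)
  intro z (hz : ε < |z|)
  have hz0 : 0 < |z| := hε.trans hz
  rw [Real.norm_eq_abs, Real.norm_eq_abs, abs_of_nonneg (by positivity), Real.rpow_neg (by positivity),
    ← div_eq_mul_inv, ← Real.div_rpow (by positivity) (by positivity), one_div,
    ← Real.inv_rpow hz0.le]
  refine Real.rpow_le_rpow (by positivity) ?_ (by linarith)
  rw [div_div, inv_eq_one_div, div_le_div_iff₀ hz0 (by positivity)]
  nlinarith

lemma int_far {s ε M x : ℝ} {v : ℝ → ℝ} (hs : 0 < s) (hε : 0 < ε) (hm : Measurable v)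
    (hb : ∀ x, |v x| ≤ M) :
    IntegrableOn (fun z : ℝ => (v x - v (x + z)) / |z| ^ (1 + 2 * s)) {z : ℝ | ε < |z|} := by
  refine Integrable.mono' ((int_abs_inv hs hε).const_mul (2 * M))
    (by fun_prop : Measurable fun z : ℝ => (v x - v (x + z)) / |z| ^ (1 + 2 * s)).aestronglyMeasurable ?_
  refine Eventually.of_forall ?_
  intro z
  have hz0 : 0 ≤ |z| ^ (1 + 2 * s) := by positivity
  rw [Real.norm_eq_abs, abs_div, abs_of_nonneg hz0, mul_one_div]
  gcongr
  have := abs_sub (v x) (v (x + z))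
  linarith [hb x, hb (x + z)]

lemma v_eq_oddPow {r : ℝ} (hr : 0 < r) {v : ℝ → ℝ} (hodd : ∀ x : ℝ, v (-x) = -v x)
    (hv : ∀ x : ℝ, 0 ≤ x → x ≤ 1 → v x = x ^ r) {x : ℝ} (h1 : -1 ≤ x) (h2 : x ≤ 1) :
    v x = oddPow r x := by
  rcases le_total 0 x with h | h
  · rw [hv x h h2, oddPow_nonneg hr h]
  · rw [← neg_neg x, hodd, oddPow_neg, hv (-x) (by linarith) (by linarith),
      oddPow_nonneg hr (by linarith)]

lemma split_int {r s x M ε : ℝ} {v : ℝ → ℝ} (hr : 2 * s < r) (hs : 0 < s)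
    (hm : Measurable v)
    (hb : ∀ x, |v x| ≤ M) (hodd : ∀ x : ℝ, v (-x) = -v x)
    (hv : ∀ x : ℝ, 0 ≤ x → x ≤ 1 → v x = x ^ r) (hx1 : -(1/2) ≤ x) (hx2 : x ≤ 1/2)
    (hε : 0 < ε) (hε2 : ε < 1/2) :
    ∫ z in {z : ℝ | ε < |z|}, (v x - v (x + z)) / |z| ^ (1 + 2 * s) =
      (∫ z in ε..(1/2), sdq r s x z) -
        ∫ y in {y : ℝ | 1 / 2 ≤ |y|}, (v (x + y) - v x) / |y| ^ (1 + 2 * s) := by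
  have hI := int_far (x := x) hs hε hm hb
  have hms : MeasurableSet {z : ℝ | 1/2 ≤ |z|} := measurableSet_le (by fun_prop) (by fun_prop)
  have hset : {z : ℝ | ε < |z|} = (Ioo ε (1/2) ∪ Ioo (-(1/2)) (-ε)) ∪ {z : ℝ | 1/2 ≤ |z|} := by
    ext z
    simp only [mem_ofPred_eq, mem_union, mem_Ioo]
    constructor
    · intro h
      rcases le_or_gt (1/2) |z| with h' | h'
      · exact Or.inr h'
      · left
        rcases lt_abs.1 h with h1 | h1
        · exact Or.inl ⟨h1, (abs_lt.1 h').2⟩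
        · exact Or.inr ⟨(abs_lt.1 h').1, by linarith⟩
    · rintro ((⟨h1, h2⟩ | ⟨h1, h2⟩) | h)
      · exact lt_abs.2 (Or.inl h1)
      · exact lt_abs.2 (Or.inr (by linarith))
      · linarith
  set F : ℝ → ℝ := fun z => (v x - v (x + z)) / |z| ^ (1 + 2 * s) with hF
  have d1 : Disjoint (Ioo ε (1/2) ∪ Ioo (-(1/2)) (-ε)) {z : ℝ | 1/2 ≤ |z|} := by
    rw [Set.disjoint_left]
    rintro z (⟨h1, h2⟩ | ⟨h1, h2⟩) (h : 1/2 ≤ |z|)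
    · exact absurd (abs_lt.2 ⟨by linarith, h2⟩) (not_lt.2 h)
    · exact absurd (abs_lt.2 ⟨h1, by linarith⟩) (not_lt.2 h)
  have d2 : Disjoint (Ioo ε (1/2)) (Ioo (-(1/2)) (-ε)) := by
    rw [Set.disjoint_left]
    rintro z ⟨h1, h2⟩ ⟨h3, h4⟩
    linarith
  rw [hset] at hI
  have i1 := hI.left_of_union.left_of_union
  have i2 := hI.left_of_union.right_of_union
  rw [hset, setIntegral_union d1 hms hI.left_of_union hI.right_of_union,
    setIntegral_union d2 measurableSet_Ioo i1 i2, sub_eq_add_neg, ← integral_neg]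
  congr 1
  · have i1' : IntervalIntegrable F volume ε (1/2) := by
      rwa [intervalIntegrable_iff_integrableOn_Ioo_of_le hε2.le]
    have i2' : IntervalIntegrable F volume (-(1/2)) (-ε) := by
      rwa [intervalIntegrable_iff_integrableOn_Ioo_of_le (by linarith)]
    have i3 : IntervalIntegrable (fun z => F (-z)) volume ε (1/2) := by
      have := (IntervalIntegrable.iff_comp_neg).1 i2'
      simpa using this.symm
    rw [← integral_Ioc_eq_integral_Ioo, ← integral_Ioc_eq_integral_Ioo,
      ← intervalIntegral.integral_of_le hε2.le, ← intervalIntegral.integral_of_le (by linarith),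
      ← intervalIntegral.integral_comp_neg, ← intervalIntegral.integral_add i1' i3]
    refine intervalIntegral.integral_congr ?_
    intro z hz
    rw [uIcc_of_le hε2.le] at hz
    have hz0 : 0 < z := by linarith [hz.1]
    have hr0 : 0 < r := by linarith
    simp only [hF, abs_neg, abs_of_pos hz0, sdq]
    rw [v_eq_oddPow hr0 hodd hv (x := x) (by linarith) (by linarith),
      v_eq_oddPow hr0 hodd hv (x := x + z) (by linarith) (by linarith [hz.2]),
      v_eq_oddPow hr0 hodd hv (x := x + -z) (by linarith [hz.2]) (by linarith), ← sub_eq_add_neg]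
    ring
  · refine setIntegral_congr_fun hms ?_
    intro z _
    simp only [hF]
    ring

lemma pv {r s x M : ℝ} {v : ℝ → ℝ} (hr : 2 * s < r) (hs : 0 < s) (hs1 : s < 1)
    (hr2 : r < 1 + 2 * s) (hm : Measurable v)
    (hb : ∀ x, |v x| ≤ M) (hodd : ∀ x : ℝ, v (-x) = -v x)
    (hv : ∀ x : ℝ, 0 ≤ x → x ≤ 1 → v x = x ^ r) (hx1 : -(1/2) ≤ x) (hx2 : x ≤ 1/2) :
    HasFracLapAt s v x (fracLapCoef s * (nearG r s x -
      ∫ y in {y : ℝ | 1 / 2 ≤ |y|}, (v (x + y) - v x) / |y| ^ (1 + 2 * s))) := by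
  have mp := measurePreserving_add_left (volume : Measure ℝ) x
  have me := measurableEmbedding_addLeft x
  have hpre : ∀ ε : ℝ, (fun z => x + z) ⁻¹' {y : ℝ | ε < |y - x|} = {z : ℝ | ε < |z|} := by
    intro ε; ext z; simp
  have hfun : ∀ z, (v x - v (x + z)) / |x - (x + z)| ^ (1 + 2 * s)
      = (v x - v (x + z)) / |z| ^ (1 + 2 * s) := by
    intro z; simp
  refine ⟨?_, ?_⟩
  · intro ε hε
    rw [← mp.integrableOn_comp_preimage me, hpre]
    refine (int_far (x := x) hs hε hm hb).congr_fun ?_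
      (measurableSet_lt (by fun_prop) (by fun_prop))
    intro z _
    exact (hfun z).symm
  · refine Tendsto.const_mul _ ?_
    have hint : IntegrableOn (sdq r s x) (uIcc 0 (1/2)) := by
      rw [uIcc_of_le (by norm_num), integrableOn_Icc_iff_integrableOn_Ioc]
      exact (int_sdq hr hs hs1 hr2).mono_set Ioc_subset_Ioi_self
    have hc := intervalIntegral.continuousOn_primitive_interval_left hint
    have hc0 := (hc 0 (by simp)).tendsto
    rw [uIcc_of_le (by norm_num)] at hc0
    have hle : nhdsWithin (0:ℝ) (Ioi 0) ≤ nhdsWithin 0 (Icc 0 (1/2)) := by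
      rw [← nhdsWithin_Ioo_eq_nhdsGT (show (0:ℝ) < 1/2 by norm_num)]
      exact nhdsWithin_mono _ Ioo_subset_Icc_self
    have h1 := (hc0.mono_left hle).sub_const
      (∫ y in {y : ℝ | 1 / 2 ≤ |y|}, (v (x + y) - v x) / |y| ^ (1 + 2 * s))
    rw [intervalIntegral.integral_of_le (by norm_num)] at h1
    refine Tendsto.congr' ?_ h1
    filter_upwards [Ioo_mem_nhdsGT (show (0:ℝ) < 1/2 by norm_num)] with ε hε
    rw [← split_int hr hs hm hb hodd hv hx1 hx2 hε.1 hε.2]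
    have h2 := mp.setIntegral_preimage_emb me
      (fun y => (v x - v y) / |x - y| ^ (1 + 2 * s)) {y : ℝ | ε < |y - x|}
    rw [← h2, hpre]
    simp_rw [hfun]

lemma far_neg {s : ℝ} {v : ℝ → ℝ} (hodd : ∀ x : ℝ, v (-x) = -v x) (x : ℝ) :
    ∫ y in {y : ℝ | 1 / 2 ≤ |y|}, (v (-x + y) - v (-x)) / |y| ^ (1 + 2 * s) =
    - ∫ y in {y : ℝ | 1 / 2 ≤ |y|}, (v (x + y) - v x) / |y| ^ (1 + 2 * s) := by
  have mp := Measure.measurePreserving_neg (volume : Measure ℝ)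
  have me := (MeasurableEquiv.neg ℝ).measurableEmbedding
  rw [← mp.setIntegral_preimage_emb me, ← integral_neg]
  have : Neg.neg ⁻¹' {y : ℝ | 1 / 2 ≤ |y|} = {y : ℝ | 1 / 2 ≤ |y|} := by ext; simp
  rw [this]
  congr 1
  ext y
  rw [abs_neg, show -x + -y = -(x + y) by ring, hodd, hodd]
  ring

theorem stmt8 (s r : ℝ) (hs0 : 0 < s) (hs1 : s < 1) (hr1 : 2 * s < r) (hr2 : r < 1 + 2 * s)
    (v : ℝ → ℝ) (hm : Measurable v) (hb : ∃ M : ℝ, ∀ x : ℝ, |v x| ≤ M)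
    (hodd : ∀ x : ℝ, v (-x) = -v x)
    (hv : ∀ x : ℝ, 0 ≤ x → x ≤ 1 → v x = x ^ r)
    (H : ℝ → ℝ)
    (hH : ∀ x : ℝ,
      H x = ∫ y in {y : ℝ | 1 / 2 ≤ |y|}, (v (x + y) - v x) / |y| ^ (1 + 2 * s))
    (hLip : ∃ K : NNReal, LipschitzOnWith K (fun t : ℝ => H (t ^ (1 / r)))
      (Set.Icc 0 ((2 : ℝ) ^ (-r)))) :
    ∃ f : ℝ → ℝ,
      MemCalpha ((r - 2 * s) / r) (Set.Icc (-((2 : ℝ) ^ (-r))) ((2 : ℝ) ^ (-r))) f ∧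
      ∀ x ∈ Set.Icc (-(1 / 2) : ℝ) (1 / 2), HasFracLapAt s v x (f (v x)) := by
  obtain ⟨M, hM⟩ := hb
  obtain ⟨K, hK⟩ := hLip
  obtain ⟨C, hC0, hC⟩ := nearG_holder hr1 hs0 hs1 hr2
  have hr0 : 0 < r := by linarith
  set β := (r - 2 * s) / r with hβ
  have hβ0 : 0 < β := div_pos (by linarith) hr0
  have hβ1 : β < 1 := by rw [hβ, div_lt_one hr0]; linarith
  have hfl : ⌊β⌋₊ = 0 := Nat.floor_eq_zero.2 hβ1
  set a : ℝ := (2:ℝ) ^ (-r) with ha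
  have ha0 : 0 < a := by positivity
  have ha1 : a ≤ 1 := Real.rpow_le_one_of_one_le_of_nonpos (by norm_num) (by linarith)
  set Q : ℝ → ℝ := fun x => fracLapCoef s * (nearG r s x - H x) with hQ
  have hQodd : ∀ x, Q (-x) = - Q x := by
    intro x
    simp only [hQ]
    rw [nearG_neg, hH (-x), far_neg hodd, ← hH x]
    ring
  have hQ0 : Q 0 = 0 := by
    have := hQodd 0
    rw [neg_zero] at this
    linarith
  have hr1' : 0 < 1 / r := by positivity
  set f : ℝ → ℝ := fun t => Q (oddPow (1/r) t) with hf
  have hfodd : ∀ t, f (-t) = - f t := by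
    intro t; simp only [hf]; rw [oddPow_neg, hQodd]
  have hf0 : f 0 = 0 := by
    have := hfodd 0
    rw [neg_zero] at this
    linarith
  set D : ℝ := |fracLapCoef s| * (C + K) with hD
  have hD0 : 0 ≤ D := by positivity
  have hpos : ∀ t ∈ Icc 0 a, ∀ u ∈ Icc 0 a, |f t - f u| ≤ D * |t - u| ^ β := by
    intro t ht u hu
    simp only [hf, hQ]
    rw [oddPow_nonneg hr1' ht.1, oddPow_nonneg hr1' hu.1, ← mul_sub, abs_mul, hD, mul_assoc]
    gcongr
    have h1 := hC t ht u hu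
    have h2 := hK.dist_le_mul t ht u hu
    rw [Real.dist_eq, Real.dist_eq] at h2
    have h3 : |t - u| ≤ |t - u| ^ β := by
      have := Real.rpow_le_rpow_of_exponent_ge' (abs_nonneg (t - u))
        (abs_le.2 ⟨by linarith [ht.1, hu.2], by linarith [ht.2, hu.1]⟩) hβ0.le hβ1.le
      rwa [Real.rpow_one] at this
    have h4 : (K:ℝ) * |t - u| ≤ K * |t - u| ^ β := by gcongr
    rw [show ∀ a b c d : ℝ, a - b - (c - d) = (a - c) - (b - d) by intros; ring]
    refine (abs_sub _ _).trans ?_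
    linarith
  have hmix : ∀ t ∈ Icc 0 a, ∀ u ∈ Icc 0 a, |f t + f u| ≤ 2 * D * (t + u) ^ β := by
    intro t ht u hu
    have h1 := hpos t ht 0 ⟨le_rfl, ha0.le⟩
    have h2 := hpos u hu 0 ⟨le_rfl, ha0.le⟩
    rw [hf0, sub_zero, sub_zero, abs_of_nonneg ht.1] at h1
    rw [hf0, sub_zero, sub_zero, abs_of_nonneg hu.1] at h2
    have h3 : t ^ β ≤ (t + u) ^ β := Real.rpow_le_rpow ht.1 (by linarith [hu.1]) hβ0.le
    have h4 : u ^ β ≤ (t + u) ^ β := Real.rpow_le_rpow hu.1 (by linarith [ht.1]) hβ0.le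
    have := abs_add_le (f t) (f u)
    nlinarith
  have hall : ∀ t ∈ Icc (-a) a, ∀ u ∈ Icc (-a) a, |f t - f u| ≤ 2 * D * |t - u| ^ β := by
    intro t ht u hu
    have hnn : 0 ≤ D * |t - u| ^ β := by positivity
    rcases le_total 0 t with h | h <;> rcases le_total 0 u with h' | h'
    · linarith [hpos t ⟨h, ht.2⟩ u ⟨h', hu.2⟩]
    · have := hmix t ⟨h, ht.2⟩ (-u) ⟨by linarith, by linarith [hu.1]⟩
      rw [hfodd, ← sub_eq_add_neg, ← sub_eq_add_neg] at this
      rwa [abs_of_nonneg (show 0 ≤ t - u by linarith)]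
    · have := hmix u ⟨h', hu.2⟩ (-t) ⟨by linarith, by linarith [ht.1]⟩
      rw [hfodd, ← sub_eq_add_neg, ← sub_eq_add_neg] at this
      rwa [abs_sub_comm, abs_sub_comm t u, abs_of_nonneg (show 0 ≤ u - t by linarith)]
    · have := hpos (-t) ⟨by linarith, by linarith [ht.1]⟩ (-u) ⟨by linarith, by linarith [hu.1]⟩
      rw [hfodd, hfodd, neg_sub_neg, neg_sub_neg, abs_sub_comm, abs_sub_comm u] at this
      linarith
  have hHol : HolderOnWith (2 * D).toNNReal β.toNNReal f (Icc (-a) a) := by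
    intro t ht u hu
    rw [edist_dist, edist_dist, Real.dist_eq, Real.dist_eq, Real.coe_toNNReal _ hβ0.le,
      ENNReal.ofReal_rpow_of_nonneg (abs_nonneg _) hβ0.le, ENNReal.ofNNReal_toNNReal,
      ← ENNReal.ofReal_mul (by positivity)]
    exact ENNReal.ofReal_le_ofReal (hall t ht u hu)
  refine ⟨f, ⟨?_, ?_, ?_⟩, ?_⟩
  · rw [hfl]
    simp only [Nat.cast_zero]
    rw [contDiffOn_zero]
    exact hHol.continuousOn (by simpa using hβ0)
  · intro k hk
    rw [hfl, Nat.le_zero] at hk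
    subst hk
    refine ⟨2 * D * a ^ β, ?_⟩
    intro x hx
    rw [iteratedDerivWithin_zero]
    have := hall x hx 0 ⟨by linarith, ha0.le⟩
    rw [hf0, sub_zero, sub_zero] at this
    refine this.trans ?_
    gcongr
    exact abs_le.2 hx
  · refine ⟨(2 * D).toNNReal, ?_⟩
    rw [hfl, iteratedDerivWithin_zero, Nat.cast_zero, sub_zero]
    exact hHol
  · intro x hx
    have hinv : oddPow (1/r) (v x) = x := by
      rw [v_eq_oddPow hr0 hodd hv (by linarith [hx.1]) (by linarith [hx.2])]
      have key : ∀ y : ℝ, 0 ≤ y → oddPow (1/r) (oddPow r y) = y := by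
        intro y hy
        rw [oddPow_nonneg hr0 hy, oddPow_nonneg hr1' (Real.rpow_nonneg hy _), ← Real.rpow_mul hy,
          mul_one_div_cancel hr0.ne', Real.rpow_one]
      rcases le_total 0 x with h | h
      · exact key x h
      · have := key (-x) (by linarith)
        rw [oddPow_neg, oddPow_neg] at this
        linarith
    simp only [hf, hQ]
    rw [hinv, hH x]
    exact pv hr1 hs0 hs1 hr2 hm hM hodd hv hx.1 hx.2
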